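/- If N is a GNN classifier in GNN_b^ACR or in GNN_b^AC+ of dimension d with L layers in which k is the largest bound of its aggregation and readout functions, then |sp(N,0)| = 2^d and, for each 0 ≤ ℓ ≤ L−1, |sp(N,ℓ+1)| ≤ |sp(N,ℓ)| · (k+1)^{2·|sp(N,ℓ)|}; in particular N has a finite spectrum. -/

import Mathlib

/-!
The point is that a `k`-bounded function on multisets over a finite set `S` depends only on the
capped multiplicities, i.e. on a function `S → Fin (k + 1)`. Hence, with `S = sp(N,ℓ)`, a label
produced by layer `ℓ + 1` is determined by the old label (an element of `S`) and two functions
`S → Fin (k + 1)`, one for the neighbours and one for the readout, so that `sp(N,ℓ+1)` is contained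
in the range of a map out of a set of cardinality `|S| * (k + 1) ^ (2 * |S|)`
(`GNN.spec_succ_bound`). Finiteness of every `sp(N,ℓ)` follows by induction, the labels beyond
the last layer being zero by convention.
-/

attribute [local instance] Classical.propDecidable

noncomputable section

/-! ## Multisets with capped multiplicities, and bounded aggregation functions -/

/-- The multiset obtained from `M` by replacing every multiplicity greater than `k` by `k`. -/
def Multiset.capAt {α : Type*} (k : ℕ) (M : Multiset α) : Multiset α :=
  haveI := Classical.decEq α
  M.toFinset.val.bind fun a => Multiset.replicate (min (M.count a) k) a

/-- A function on multisets is `k`-bounded if its value on any multiset agrees with its value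
on the multiset with all multiplicities capped at `k`. -/
def KBounded {α β : Type*} (k : ℕ) (f : Multiset α → β) : Prop :=
  ∀ M : Multiset α, f M = f (M.capAt k)

/-- A function on multisets is bounded if it is `k`-bounded for some `k`;
it is set-based if it is `1`-bounded. -/
def BoundedAgg {α β : Type*} (f : Multiset α → β) : Prop :=
  ∃ k : ℕ, KBounded k f

/-! ## Finite undirected simple node-labelled graphs -/

structure LGraph (d : ℕ) where
  n : ℕ
  adj : Fin n → Fin n → Prop
  symm : ∀ u v, adj u v → adj v u
  irrefl : ∀ v, ¬ adj v v
  label : Fin n → Fin d → Bool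

/-- The neighbours of a node. -/
def LGraph.nbrs {d : ℕ} (G : LGraph d) (v : Fin G.n) : Finset (Fin G.n) :=
  Finset.univ.filter fun w => G.adj v w

/-- The non-neighbours of a node (excluding the node itself). -/
def LGraph.conbrs {d : ℕ} (G : LGraph d) (v : Fin G.n) : Finset (Fin G.n) :=
  Finset.univ.filter fun w => ¬ G.adj v w ∧ w ≠ v

/-! ## GNN classifiers -/

/-- The kind of the layers of a GNN: aggregate-combine (`AC`),
aggregate-combine-readout (`ACR`), or extended aggregate-combine (`ACP`, i.e. `AC+`). -/
inductive GNNKind : Type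
  | AC | ACR | ACP

/-- A GNN layer from dimension `din` to dimension `dout`: an aggregation function `agg`
(over neighbours), an auxiliary aggregation/readout function `aux` (fed the empty multiset in
`AC` layers, the multiset of all node labels in `ACR` layers, and the multiset of labels of
non-neighbours in `AC+` layers), and a combination function `comb`. -/
structure GNNLayer (din dout : ℕ) where
  m₁ : ℕ
  m₂ : ℕ
  agg : Multiset (Fin din → ℝ) → Fin m₁ → ℝ
  aux : Multiset (Fin din → ℝ) → Fin m₂ → ℝ
  comb : (Fin din → ℝ) → (Fin m₁ → ℝ) → (Fin m₂ → ℝ) → Fin dout → ℝ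

/-- A GNN classifier of dimension `d` with `L` layers of matching dimensions and a
classification function `cls`. -/
structure GNN (d : ℕ) where
  kind : GNNKind
  L : ℕ
  dims : ℕ → ℕ
  dims_zero : dims 0 = d
  layer : (ℓ : ℕ) → ℓ < L → GNNLayer (dims ℓ) (dims (ℓ + 1))
  cls : (Fin (dims L) → ℝ) → Bool

/-- The set of nodes whose labels are fed to the second aggregation function `aux`. -/
def GNN.auxSet {d : ℕ} (N : GNN d) (G : LGraph d) (v : Fin G.n) : Finset (Fin G.n) :=
  match N.kind with
  | GNNKind.AC => ∅
  | GNNKind.ACR => Finset.univ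
  | GNNKind.ACP => G.conbrs v

/-- The labelling of the nodes of `G` after `ℓ` layers of `N` have been applied. -/
def GNN.labelAt {d : ℕ} (N : GNN d) (G : LGraph d) : (ℓ : ℕ) → Fin G.n → Fin (N.dims ℓ) → ℝ
  | 0 => fun v i => if G.label v (Fin.cast N.dims_zero i) = true then 1 else 0
  | ℓ + 1 => fun v =>
      if h : ℓ < N.L then
        (N.layer ℓ h).comb (N.labelAt G ℓ v)
          ((N.layer ℓ h).agg ((G.nbrs v).val.map fun w => N.labelAt G ℓ w))
          ((N.layer ℓ h).aux ((N.auxSet G v).val.map fun w => N.labelAt G ℓ w))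
      else fun _ => 0

/-- The output of the GNN classifier `N` on the pointed graph `(G, v)`. -/
def GNN.eval {d : ℕ} (N : GNN d) (G : LGraph d) (v : Fin G.n) : Bool :=
  N.cls (N.labelAt G N.L v)

/-- The spectrum of `N` at layer `ℓ`: by convention, at layer `0` it is the set of Boolean
vectors of the dimension of `N`; at layer `ℓ + 1` it is the set of vectors that can occur as
node labels upon application of layer `ℓ + 1` in applications of `N` to graphs. -/
def GNN.spec {d : ℕ} (N : GNN d) : (ℓ : ℕ) → Set (Fin (N.dims ℓ) → ℝ)
  | 0 => {x | ∀ i, x i = 0 ∨ x i = 1}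
  | ℓ + 1 => {x | ∃ (G : LGraph d) (v : Fin G.n), N.labelAt G (ℓ + 1) v = x}

/-! ## Modal formulas (GMLC and its fragments GML, ML(E), ML) -/

inductive MForm (d : ℕ) : Type
  | prop : Fin d → MForm d
  | neg : MForm d → MForm d
  | and : MForm d → MForm d → MForm d
  | dia : ℕ → MForm d → MForm d
  | glob : ℕ → MForm d → MForm d

namespace MForm

/-- Modal depth. -/
def depth {d : ℕ} : MForm d → ℕ
  | prop _ => 0
  | neg φ => depth φ
  | and φ ψ => max (depth φ) (depth ψ)
  | dia _ φ => depth φ + 1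
  | glob _ φ => depth φ + 1

/-- Counting rank. -/
def rank {d : ℕ} : MForm d → ℕ
  | prop _ => 0
  | neg φ => rank φ
  | and φ ψ => max (rank φ) (rank ψ)
  | dia k φ => max k (rank φ)
  | glob k φ => max k (rank φ)

/-- Graded modal logic: no global modalities, grades are positive. -/
def IsGML {d : ℕ} : MForm d → Prop
  | prop _ => True
  | neg φ => IsGML φ
  | and φ ψ => IsGML φ ∧ IsGML ψ
  | dia k φ => 1 ≤ k ∧ IsGML φ
  | glob _ _ => False

/-- Basic modal logic: no global modalities, all graded modalities are `◇₁`. -/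
def IsML {d : ℕ} : MForm d → Prop
  | prop _ => True
  | neg φ => IsML φ
  | and φ ψ => IsML φ ∧ IsML ψ
  | dia k φ => k = 1 ∧ IsML φ
  | glob _ _ => False

/-- Graded modal logic with counting: grades are positive. -/
def IsGMLC {d : ℕ} : MForm d → Prop
  | prop _ => True
  | neg φ => IsGMLC φ
  | and φ ψ => IsGMLC φ ∧ IsGMLC ψ
  | dia k φ => 1 ≤ k ∧ IsGMLC φ
  | glob k φ => 1 ≤ k ∧ IsGMLC φ

/-- Modal logic with the global modality: all modalities are `◇₁` or `∃₁`. -/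
def IsMLE {d : ℕ} : MForm d → Prop
  | prop _ => True
  | neg φ => IsMLE φ
  | and φ ψ => IsMLE φ ∧ IsMLE ψ
  | dia k φ => k = 1 ∧ IsMLE φ
  | glob k φ => k = 1 ∧ IsMLE φ

/-- A tautology (needs a proposition to exist). -/
def top {d : ℕ} (hd : 0 < d) : MForm d :=
  neg (and (prop ⟨0, hd⟩) (neg (prop ⟨0, hd⟩)))

/-- Conjunction of a list of formulas (the empty conjunction is a tautology). -/
def conjList {d : ℕ} (hd : 0 < d) : List (MForm d) → MForm d
  | [] => top hd
  | [φ] => φ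
  | φ :: ψ :: rest => and φ (conjList hd (ψ :: rest))

end MForm

/-! ## Finite pointed Kripke models -/

structure KModel (d : ℕ) where
  W : Type
  fintype : Fintype W
  R : W → W → Prop
  symm : ∀ u v, R u v → R v u
  irrefl : ∀ v, ¬ R v v
  val : W → Fin d → Prop

/-- Satisfaction of modal formulas. -/
def KModel.sat {d : ℕ} (M : KModel d) : M.W → MForm d → Prop
  | v, MForm.prop p => M.val v p
  | v, MForm.neg φ => ¬ M.sat v φ
  | v, MForm.and φ ψ => M.sat v φ ∧ M.sat v ψ
  | v, MForm.dia k φ => k ≤ Nat.card {w : M.W // M.R v w ∧ M.sat w φ}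
  | v, MForm.glob k φ => k ≤ Nat.card {w : M.W // M.sat w φ}

/-- A list enumerating the worlds of a finite Kripke model. -/
def KModel.worldList {d : ℕ} (M : KModel d) : List M.W :=
  haveI := M.fintype
  Finset.univ.toList

/-- The Kripke model associated with a node-labelled graph. -/
def LGraph.toKModel {d : ℕ} (G : LGraph d) : KModel d where
  W := Fin G.n
  fintype := inferInstance
  R := G.adj
  symm := G.symm
  irrefl := G.irrefl
  val := fun v p => G.label v p = true

/-! ## Graded bisimulation games -/

/-- `GBisim c ℓ M v M' v'` holds iff Duplicator has a winning strategy in the `ℓ`-round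
`c`-graded bisimulation game starting from configuration `(M, v, M', v')`. -/
def GBisim {d : ℕ} (c : ℕ) : (ℓ : ℕ) → (M : KModel d) → M.W → (M' : KModel d) → M'.W → Prop
  | 0, M, v, M', v' => ∀ p, M.val v p ↔ M'.val v' p
  | ℓ + 1, M, v, M', v' =>
      (∀ p, M.val v p ↔ M'.val v' p) ∧
      (∀ U₁ : Finset M.W, U₁.Nonempty → U₁.card ≤ c → (∀ u ∈ U₁, M.R v u) →
        ∃ U₂ : Finset M'.W, U₂.card = U₁.card ∧ (∀ u ∈ U₂, M'.R v' u) ∧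
          ∀ u₂ ∈ U₂, ∃ u₁ ∈ U₁, GBisim c ℓ M u₁ M' u₂) ∧
      (∀ U₁ : Finset M'.W, U₁.Nonempty → U₁.card ≤ c → (∀ u ∈ U₁, M'.R v' u) →
        ∃ U₂ : Finset M.W, U₂.card = U₁.card ∧ (∀ u ∈ U₂, M.R v u) ∧
          ∀ u₂ ∈ U₂, ∃ u₁ ∈ U₁, GBisim c ℓ M u₂ M' u₁)

/-- `GBisimG c ℓ M v M' v'` holds iff Duplicator has a winning strategy in the `ℓ`-round
`c`-graded *global* bisimulation game starting from configuration `(M, v, M', v')`: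
Spoiler may additionally play global rounds, selecting worlds anywhere in one model. -/
def GBisimG {d : ℕ} (c : ℕ) : (ℓ : ℕ) → (M : KModel d) → M.W → (M' : KModel d) → M'.W → Prop
  | 0, M, v, M', v' => ∀ p, M.val v p ↔ M'.val v' p
  | ℓ + 1, M, v, M', v' =>
      (∀ p, M.val v p ↔ M'.val v' p) ∧
      (∀ U₁ : Finset M.W, U₁.Nonempty → U₁.card ≤ c → (∀ u ∈ U₁, M.R v u) →
        ∃ U₂ : Finset M'.W, U₂.card = U₁.card ∧ (∀ u ∈ U₂, M'.R v' u) ∧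
          ∀ u₂ ∈ U₂, ∃ u₁ ∈ U₁, GBisimG c ℓ M u₁ M' u₂) ∧
      (∀ U₁ : Finset M'.W, U₁.Nonempty → U₁.card ≤ c → (∀ u ∈ U₁, M'.R v' u) →
        ∃ U₂ : Finset M.W, U₂.card = U₁.card ∧ (∀ u ∈ U₂, M.R v u) ∧
          ∀ u₂ ∈ U₂, ∃ u₁ ∈ U₁, GBisimG c ℓ M u₂ M' u₁) ∧
      (∀ U₁ : Finset M.W, U₁.Nonempty → U₁.card ≤ c →
        ∃ U₂ : Finset M'.W, U₂.card = U₁.card ∧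
          ∀ u₂ ∈ U₂, ∃ u₁ ∈ U₁, GBisimG c ℓ M u₁ M' u₂) ∧
      (∀ U₁ : Finset M'.W, U₁.Nonempty → U₁.card ≤ c →
        ∃ U₂ : Finset M.W, U₂.card = U₁.card ∧
          ∀ u₂ ∈ U₂, ∃ u₁ ∈ U₁, GBisimG c ℓ M u₂ M' u₁)

/-! ## Characteristic formulas -/

/-- The conjunction of all propositions true at `v` and of the negations of all
propositions false at `v`. -/
def atomDesc {d : ℕ} (hd : 0 < d) (M : KModel d) (v : M.W) : MForm d :=
  MForm.conjList hd ((List.finRange d).map fun p =>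
    if M.val v p then MForm.prop p else MForm.neg (MForm.prop p))

/-- `|U^n_{v,w}|`: the number of neighbours `u` of `v` with `(M,u) ∼_{n,c} (M,w)`. -/
def USet {d : ℕ} (c n : ℕ) (M : KModel d) (v w : M.W) : ℕ :=
  Nat.card {u : M.W // M.R v u ∧ GBisim c n M u M w}

/-- The characteristic formula `φ^{ℓ,c}_{[M,v]}` of a finite pointed Kripke model for GML. -/
def charF {d : ℕ} (hd : 0 < d) (c : ℕ) (M : KModel d) : ℕ → M.W → MForm d
  | 0, v => atomDesc hd M v
  | n + 1, v =>
      MForm.conjList hd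
        ([atomDesc hd M v] ++
         ((M.worldList.filter fun w => decide (M.R v w)).flatMap fun w =>
            ((List.range c).map (· + 1)).filterMap fun k =>
              if k ≤ min (USet c n M v w) c then some (MForm.dia k (charF hd c M n w))
              else none) ++
         ((M.worldList.filter fun w => decide (M.R v w)).flatMap fun w =>
            ((List.range c).map (· + 1)).filterMap fun k =>
              if USet c n M v w < k ∧ k ≤ c then
                some (MForm.neg (MForm.dia k (charF hd c M n w)))
              else none) ++
         [MForm.neg (MForm.dia 1 (MForm.conjList hd
            ((M.worldList.filter fun w => decide (M.R v w)).map fun w =>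
              MForm.neg (charF hd c M n w))))])

/-- `|U^n_{v,w}|` for the global game. -/
def USetG {d : ℕ} (c n : ℕ) (M : KModel d) (v w : M.W) : ℕ :=
  Nat.card {u : M.W // M.R v u ∧ GBisimG c n M u M w}

/-- `|J^n_w|`: the number of worlds `u` with `(M,u) ∼^∃_{n,c} (M,w)`. -/
def JSetG {d : ℕ} (c n : ℕ) (M : KModel d) (w : M.W) : ℕ :=
  Nat.card {u : M.W // GBisimG c n M u M w}

/-- The global characteristic formula `φ^{ℓ,c}_{∃[M,v]}` for GMLC. -/
def charG {d : ℕ} (hd : 0 < d) (c : ℕ) (M : KModel d) : ℕ → M.W → MForm d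
  | 0, v => atomDesc hd M v
  | n + 1, v =>
      MForm.conjList hd
        ([atomDesc hd M v] ++
         ((M.worldList.filter fun w => decide (M.R v w)).flatMap fun w =>
            ((List.range c).map (· + 1)).filterMap fun k =>
              if k ≤ min (USetG c n M v w) c then some (MForm.dia k (charG hd c M n w))
              else none) ++
         ((M.worldList.filter fun w => decide (M.R v w)).flatMap fun w =>
            ((List.range c).map (· + 1)).filterMap fun k =>
              if USetG c n M v w < k ∧ k ≤ c then
                some (MForm.neg (MForm.dia k (charG hd c M n w)))
              else none) ++
         (M.worldList.flatMap fun w =>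
            ((List.range c).map (· + 1)).filterMap fun k =>
              if k ≤ min (JSetG c n M w) c then some (MForm.glob k (charG hd c M n w))
              else none) ++
         (M.worldList.flatMap fun w =>
            ((List.range c).map (· + 1)).filterMap fun k =>
              if JSetG c n M w < k ∧ k ≤ c then
                some (MForm.neg (MForm.glob k (charG hd c M n w)))
              else none) ++
         [MForm.neg (MForm.dia 1 (MForm.conjList hd
            ((M.worldList.filter fun w => decide (M.R v w)).map fun w =>
              MForm.neg (charG hd c M n w)))),
          MForm.neg (MForm.glob 1 (MForm.conjList hd
            (M.worldList.map fun w => MForm.neg (charG hd c M n w))))])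

/-! ## Two-variable first-order logic with counting quantifiers (C²) -/

/-- C² formulas over unary predicates `p₁, …, p_d` and one binary relation `E`, with the two
variables represented by `Bool` (`false` is the distinguished free variable `x`). -/
inductive C2Form (d : ℕ) : Type
  | prop : Fin d → Bool → C2Form d
  | edge : Bool → Bool → C2Form d
  | eq : Bool → Bool → C2Form d
  | neg : C2Form d → C2Form d
  | and : C2Form d → C2Form d → C2Form d
  | exC : ℕ → Bool → C2Form d → C2Form d

namespace C2Form

/-- Quantifier depth. -/
def depth {d : ℕ} : C2Form d → ℕ
  | prop _ _ => 0
  | edge _ _ => 0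
  | eq _ _ => 0
  | neg φ => depth φ
  | and φ ψ => max (depth φ) (depth ψ)
  | exC _ _ φ => depth φ + 1

/-- Counting rank. -/
def rank {d : ℕ} : C2Form d → ℕ
  | prop _ _ => 0
  | edge _ _ => 0
  | eq _ _ => 0
  | neg φ => rank φ
  | and φ ψ => max (rank φ) (rank ψ)
  | exC k _ φ => max k (rank φ)

/-- Well-formed C² formulas: all counting indices are positive. -/
def IsC2 {d : ℕ} : C2Form d → Prop
  | prop _ _ => True
  | edge _ _ => True
  | eq _ _ => True
  | neg φ => IsC2 φ
  | and φ ψ => IsC2 φ ∧ IsC2 ψ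
  | exC k _ φ => 1 ≤ k ∧ IsC2 φ

/-- FO² formulas: all counting quantifiers are with `k = 1`, i.e. ordinary `∃`. -/
def IsFO2 {d : ℕ} : C2Form d → Prop
  | prop _ _ => True
  | edge _ _ => True
  | eq _ _ => True
  | neg φ => IsFO2 φ
  | and φ ψ => IsFO2 φ ∧ IsFO2 ψ
  | exC k _ φ => k = 1 ∧ IsFO2 φ

/-- The set of free variables of a formula. -/
def free {d : ℕ} : C2Form d → Set Bool
  | prop _ b => {b}
  | edge b₁ b₂ => {b₁, b₂}
  | eq b₁ b₂ => {b₁, b₂}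
  | neg φ => free φ
  | and φ ψ => free φ ∪ free ψ
  | exC _ b φ => free φ \ {b}

end C2Form

/-- A finite first-order structure over the signature with unary predicates `p₁, …, p_d`
and one binary relation `E`. -/
structure FOModel (d : ℕ) where
  W : Type
  fintype : Fintype W
  E : W → W → Prop
  val : W → Fin d → Prop

/-- First-order satisfaction of C² formulas under an assignment of the two variables. -/
def FOModel.sat {d : ℕ} (M : FOModel d) : (Bool → M.W) → C2Form d → Prop
  | a, C2Form.prop p b => M.val (a b) p
  | a, C2Form.edge b₁ b₂ => M.E (a b₁) (a b₂)
  | a, C2Form.eq b₁ b₂ => a b₁ = a b₂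
  | a, C2Form.neg φ => ¬ M.sat a φ
  | a, C2Form.and φ ψ => M.sat a φ ∧ M.sat a ψ
  | a, C2Form.exC k b φ => k ≤ Nat.card {w : M.W // M.sat (Function.update a b w) φ}

/-- The first-order structure associated with a node-labelled graph. -/
def LGraph.toFOModel {d : ℕ} (G : LGraph d) : FOModel d where
  W := Fin G.n
  fintype := inferInstance
  E := G.adj
  val := fun v p => G.label v p = true

/-! ## Two-pebble graded games -/

/-- The positions of the pebbles (pair 1 placed, pair 2 possibly unplaced) form a partial
isomorphism between `M` and `M'`. -/
def PIso {d : ℕ} (M M' : FOModel d) (p₁ : M.W × M'.W) (p₂ : Option (M.W × M'.W)) : Prop :=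
  ((∀ q, M.val p₁.1 q ↔ M'.val p₁.2 q) ∧ (M.E p₁.1 p₁.1 ↔ M'.E p₁.2 p₁.2)) ∧
  ∀ x ∈ p₂,
    (∀ q, M.val x.1 q ↔ M'.val x.2 q) ∧ (M.E x.1 x.1 ↔ M'.E x.2 x.2) ∧
    (p₁.1 = x.1 ↔ p₁.2 = x.2) ∧
    (M.E p₁.1 x.1 ↔ M'.E p₁.2 x.2) ∧ (M.E x.1 p₁.1 ↔ M'.E x.2 p₁.2)

/-- Update the configuration by moving pebble pair `i` (`false` = pair 1, `true` = pair 2)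
to the given pair of worlds. -/
def updCfg {α β : Type*} (p₁ : α × β) (p₂ : Option (α × β)) :
    Bool → α × β → (α × β) × Option (α × β)
  | false, x => (x, p₂)
  | true, x => (p₁, some x)

/-- `PebbleWin c M M' ℓ p₁ p₂` holds iff Duplicator has a winning strategy in the 2-pebble
`ℓ`-round `c`-graded game from the configuration with pebble pair 1 on `p₁` and pebble pair 2
on `p₂` (if placed): she can ensure that the pebble positions always form a partial
isomorphism. -/
def PebbleWin {d : ℕ} (c : ℕ) (M M' : FOModel d) :
    (ℓ : ℕ) → M.W × M'.W → Option (M.W × M'.W) → Prop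
  | 0, p₁, p₂ => PIso M M' p₁ p₂
  | ℓ + 1, p₁, p₂ =>
      PIso M M' p₁ p₂ ∧
      ∀ i : Bool,
        (∀ U : Finset M.W, U.Nonempty → U.card ≤ c →
          ∃ U' : Finset M'.W, U'.card = U.card ∧
            ∀ u' ∈ U', ∃ u ∈ U,
              PebbleWin c M M' ℓ (updCfg p₁ p₂ i (u, u')).1 (updCfg p₁ p₂ i (u, u')).2) ∧
        (∀ U : Finset M'.W, U.Nonempty → U.card ≤ c →
          ∃ U' : Finset M.W, U'.card = U.card ∧
            ∀ u ∈ U', ∃ u' ∈ U,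
              PebbleWin c M M' ℓ (updCfg p₁ p₂ i (u, u')).1 (updCfg p₁ p₂ i (u, u')).2)

end

theorem count_capAt {α : Type*} [DecidableEq α] (k : ℕ) (M : Multiset α) (a : α) :
    (M.capAt k).count a = min (M.count a) k := by
  classical
  unfold Multiset.capAt
  rw [Multiset.count_bind]
  change ∑ b ∈ _, _ = _
  simp only [Multiset.count_replicate]
  rw [Finset.sum_ite_eq' _ a]
  split_ifs with h
  · congr 1
    convert rfl
  · have : a ∉ M := by
      intro h'
      apply h
      simpa using h'
    simp [Multiset.count_eq_zero_of_notMem this]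

/-- The multiset of elements of `S` with prescribed multiplicities at most `k`. -/
noncomputable def multOf {α : Type*} (S : Set α) [Fintype S] (k : ℕ) (f : S → Fin (k + 1)) : Multiset α :=
  ∑ s : S, Multiset.replicate (f s : ℕ) (s : α)

theorem capAt_eq_multOf {α : Type*} (S : Set α) [Fintype S] (k : ℕ) (M : Multiset α)
    (hM : ∀ a ∈ M, a ∈ S) : ∃ f : S → Fin (k + 1), M.capAt k = multOf S k f := by
  classical
  refine ⟨fun s => ⟨min (M.count (s : α)) k, by omega⟩, ?_⟩
  ext a
  rw [count_capAt, multOf, Multiset.count_sum']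
  simp only [Multiset.count_replicate]
  by_cases ha : a ∈ S
  · rw [Finset.sum_eq_single (⟨a, ha⟩ : S)]
    · simp
    · intro b _ hb
      rw [if_neg]
      rintro rfl
      exact hb rfl
    · simp
  · rw [Multiset.count_eq_zero_of_notMem fun h => ha (hM a h), Nat.zero_min, eq_comm]
    refine Finset.sum_eq_zero fun b _ => if_neg ?_
    rintro rfl
    exact ha b.2

theorem GNN.labelAt_mem_spec {d : ℕ} (N : GNN d) (G : LGraph d) (ℓ : ℕ) (v : Fin G.n) :
    N.labelAt G ℓ v ∈ N.spec ℓ := by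
  cases ℓ with
  | zero =>
    intro i
    simp only [GNN.labelAt]
    split_ifs <;> simp
  | succ ℓ => exact ⟨G, v, rfl⟩

/-- The set of `0/1` vectors is the image of the Boolean cube under an injection. -/
theorem GNN.spec_zero_eq_range {d : ℕ} (N : GNN d) :
    N.spec 0 = Set.range fun (b : Fin (N.dims 0) → Bool) i => if b i then (1 : ℝ) else 0 := by
  ext x
  constructor
  · intro hx
    refine ⟨fun i => decide (x i = 1), ?_⟩
    funext i
    rcases hx i with h | h <;> simp [h]
  · rintro ⟨b, rfl⟩ i
    by_cases h : b i <;> simp [h]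

theorem GNN.spec_zero_ncard {d : ℕ} (N : GNN d) : (N.spec 0).ncard = 2 ^ d := by
  rw [N.spec_zero_eq_range, ← Set.image_univ, Set.ncard_image_of_injective, Set.ncard_univ]
  · simp [N.dims_zero]
  · intro b c h
    funext i
    have := congrFun h i
    by_cases h1 : b i <;> by_cases h2 : c i <;> simp_all

/-- The inductive step: a layer with `k`-bounded functions maps a finite spectrum to a finite one,
with the stated bound on its cardinality. The kind of the layer plays no role, since in each case
`aux` is applied to a multiset of old labels. -/
theorem GNN.spec_succ_bound {d : ℕ} (N : GNN d) (k ℓ : ℕ) (h : ℓ < N.L)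
    (hagg : KBounded k (N.layer ℓ h).agg) (haux : KBounded k (N.layer ℓ h).aux)
    (hfin : (N.spec ℓ).Finite) :
    (N.spec (ℓ + 1)).Finite ∧
      (N.spec (ℓ + 1)).ncard ≤ (N.spec ℓ).ncard * (k + 1) ^ (2 * (N.spec ℓ).ncard) := by
  classical
  have : Fintype (N.spec ℓ) := hfin.fintype
  let F : (N.spec ℓ) × (N.spec ℓ → Fin (k + 1)) × (N.spec ℓ → Fin (k + 1)) →
      (Fin (N.dims (ℓ + 1)) → ℝ) := fun p =>
    (N.layer ℓ h).comb p.1 ((N.layer ℓ h).agg (multOf _ k p.2.1))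
      ((N.layer ℓ h).aux (multOf _ k p.2.2))
  have hsub : N.spec (ℓ + 1) ⊆ Set.range F := by
    rintro _ ⟨G, v, rfl⟩
    have key (T : Finset (Fin G.n)) :
        ∃ f, (T.val.map fun w => N.labelAt G ℓ w).capAt k = multOf (N.spec ℓ) k f := by
      apply capAt_eq_multOf
      intro a ha
      obtain ⟨w, -, rfl⟩ := Multiset.mem_map.1 ha
      exact N.labelAt_mem_spec G ℓ w
    obtain ⟨f, hf⟩ := key (G.nbrs v)
    obtain ⟨g, hg⟩ := key (N.auxSet G v)
    refine ⟨(⟨_, N.labelAt_mem_spec G ℓ v⟩, f, g), ?_⟩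
    simp only [GNN.labelAt, dif_pos h]
    rw [hagg (Multiset.map _ (G.nbrs v).val), haux (Multiset.map _ (N.auxSet G v).val), hf, hg]
  refine ⟨(Set.finite_range F).subset hsub, ?_⟩
  calc (N.spec (ℓ + 1)).ncard ≤ (Set.range F).ncard :=
        Set.ncard_le_ncard hsub (Set.finite_range F)
    _ ≤ Nat.card ((N.spec ℓ) × (N.spec ℓ → Fin (k + 1)) × (N.spec ℓ → Fin (k + 1))) := by
        rw [← Set.image_univ, ← Set.ncard_univ]
        exact Set.ncard_image_le
    _ = _ := by
        rw [Nat.card_prod, Nat.card_prod, Nat.card_fun, Nat.card_fin, Nat.card_coe_set_eq,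
          two_mul, pow_add]

/-- If `N` is a GNN classifier in `GNN_b^ACR` or in `GNN_b^AC+` of dimension
`d` with `L` layers in which `k` is the largest bound of its aggregation and readout functions
(so all of them are `k`-bounded), then `|sp(N,0)| = 2^d` and, for each `0 ≤ ℓ ≤ L−1`,
`|sp(N,ℓ+1)| ≤ |sp(N,ℓ)| · (k+1)^{2·|sp(N,ℓ)|}`; in particular `N` has a finite spectrum. -/
theorem bounded_acr_acplus_spectrum :
    ∀ (d : ℕ) (N : GNN d) (k : ℕ),
      (N.kind = GNNKind.ACR ∨ N.kind = GNNKind.ACP) →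
      (∀ (ℓ : ℕ) (h : ℓ < N.L),
        KBounded k (N.layer ℓ h).agg ∧ KBounded k (N.layer ℓ h).aux) →
      (N.spec 0).ncard = 2 ^ d ∧
      (∀ ℓ : ℕ, ℓ + 1 ≤ N.L →
        (N.spec (ℓ + 1)).ncard ≤ (N.spec ℓ).ncard * (k + 1) ^ (2 * (N.spec ℓ).ncard)) ∧
      (∀ ℓ : ℕ, (N.spec ℓ).Finite) := by
  intro d N k _ hb
  have hfin : ∀ ℓ, (N.spec ℓ).Finite := by
    intro ℓ
    induction ℓ with
    | zero =>
      rw [N.spec_zero_eq_range]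
      exact Set.finite_range _
    | succ ℓ ih =>
      by_cases h : ℓ < N.L
      · exact (N.spec_succ_bound k ℓ h (hb ℓ h).1 (hb ℓ h).2 ih).1
      · refine (Set.finite_singleton fun _ => 0).subset ?_
        rintro _ ⟨G, v, rfl⟩
        simp only [GNN.labelAt, dif_neg h]
        rfl
  exact ⟨N.spec_zero_ncard,
    fun ℓ h => (N.spec_succ_bound k ℓ h (hb ℓ h).1 (hb ℓ h).2 (hfin ℓ)).2, hfin⟩
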